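/- Let φ : ℝ → ℝ^n be a continuous ω-periodic function and ψ : ℝ → ℝ^n a Poisson stable function with Poisson sequence (t_k). If the Poisson number κ_ω of (t_k) with respect to ω equals zero, then the modulo periodic Poisson stable function f(t) = φ(t) + ψ(t) is itself Poisson stable. -/

import Mathlib

/-!
The set of Poisson shifts is nonempty, since the residues of `tk` modulo `ω` lie in the compact
interval `[0, ω]` (`exists_isPoissonShift`). Hence a zero Poisson number really provides shifts
arbitrarily close to `0`, and a diagonal argument yields a subsequence of `tk` converging to `0`
modulo `ω` (`exists_subseq_tendsToModulo_zero`). Along it the translates of `φ` converge to `φ`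
uniformly on compact intervals, by periodicity and continuity, and those of `ψ` still converge
to `ψ`, so it is a Poisson sequence of the sum.
-/

open Filter Topology

/-- `s l → τ (mod ω)`: the distance from `s l − τ` to the set `ωℤ` tends to `0`. -/
def TendsToModulo (s : ℕ → ℝ) (τ ω : ℝ) : Prop :=
  Tendsto (fun l => Metric.infDist (s l - τ) (Set.range fun m : ℤ => ω * (m : ℝ)))
    atTop (𝓝 0)

/-- `τ ∈ [0, ω)` is a Poisson shift of `(t_k)` with respect to `ω` if some subsequence
of `(t_k)` converges to `τ` modulo `ω`. -/
def IsPoissonShift (t : ℕ → ℝ) (ω τ : ℝ) : Prop :=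
  0 ≤ τ ∧ τ < ω ∧ ∃ φ : ℕ → ℕ, StrictMono φ ∧ TendsToModulo (t ∘ φ) τ ω

/-- The Poisson number `κ_ω` is the infimum of the set `T_ω` of Poisson shifts. -/
noncomputable def poissonNumber (t : ℕ → ℝ) (ω : ℝ) : ℝ :=
  sInf {τ | IsPoissonShift t ω τ}

/-- A continuous bounded function `f` is Poisson stable with Poisson sequence `(t_k)` if
`t_k → ∞` and `f (· + t_k) → f` uniformly on every bounded interval of `ℝ`. -/
def PoissonStableWith {E : Type*} [NormedAddCommGroup E] (f : ℝ → E) (t : ℕ → ℝ) : Prop :=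
  Continuous f ∧ (∃ M, ∀ x, ‖f x‖ ≤ M) ∧ Tendsto t atTop atTop ∧
    ∀ a b : ℝ, TendstoUniformlyOn (fun k x => f (x + t k)) f atTop (Set.Icc a b)

/-- A function is Poisson stable if it admits some Poisson sequence. -/
def PoissonStable {E : Type*} [NormedAddCommGroup E] (f : ℝ → E) : Prop :=
  ∃ t : ℕ → ℝ, PoissonStableWith f t

/-- Every sequence has a Poisson shift, by compactness of `[0, ω]`. In particular the infimum
defining `poissonNumber` is never the junk value `sInf ∅ = 0`. -/
lemma exists_isPoissonShift (t : ℕ → ℝ) {ω : ℝ} (hω : 0 < ω) : ∃ τ, IsPoissonShift t ω τ := by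
  obtain ⟨τ, hτ, s, hs, hlim⟩ := isCompact_Icc.tendsto_subseq
    (fun k => Set.Ico_subset_Icc_self (toIcoMod_mem_Ico' hω (t k)))
  -- It suffices to find `τ' ∈ [0, ω)` congruent to the limit residue `τ` modulo `ω`.
  have key : ∀ (τ' : ℝ) (j : ℤ), τ = τ' + ω * j → TendsToModulo (t ∘ s) τ' ω := by
    intro τ' j hj
    refine squeeze_zero (fun _ => Metric.infDist_nonneg) (fun l => ?_)
      (tendsto_iff_dist_tendsto_zero.1 hlim)
    refine (Metric.infDist_le_dist_of_mem
      (Set.mem_range_self (toIcoDiv hω 0 (t (s l)) + j))).trans (le_of_eq ?_)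
    have h := toIcoMod_add_toIcoDiv_zsmul hω 0 (t (s l))
    rw [zsmul_eq_mul] at h
    simp only [Function.comp_apply, Real.dist_eq, Int.cast_add]
    congr 1
    linear_combination hj - h
  rcases hτ.2.lt_or_eq with h | h
  · exact ⟨τ, hτ.1, h, s, hs, key τ 0 (by simp)⟩
  · exact ⟨0, le_rfl, hω, s, hs, key 0 1 (by simp [h])⟩

lemma exists_subseq_tendsToModulo_zero {t : ℕ → ℝ} {ω : ℝ} (hω : 0 < ω)
    (hκ : poissonNumber t ω = 0) :
    ∃ s : ℕ → ℕ, StrictMono s ∧ TendsToModulo (t ∘ s) 0 ω := by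
  have hfreq : ∀ l : ℕ, ∃ᶠ k in atTop,
      Metric.infDist (t k - 0) (Set.range fun m : ℤ => ω * (m : ℝ)) < 1 / ((l : ℝ) + 1) := by
    intro l
    have hε : (0 : ℝ) < 1 / ((l : ℝ) + 1) := by positivity
    obtain ⟨τ, ⟨hτ0, -, s, hs, hlim⟩, hτ⟩ : ∃ τ ∈ {τ | IsPoissonShift t ω τ},
        τ < 1 / ((l : ℝ) + 1) / 2 := by
      refine exists_lt_of_csInf_lt (exists_isPoissonShift t hω) ?_
      change poissonNumber t ω < _
      rw [hκ]
      exact half_pos hε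
    refine hs.tendsto_atTop.frequently (Eventually.frequently ?_)
    filter_upwards [hlim.eventually_lt_const (half_pos hε)] with k hk
    have hd : dist (t (s k) - 0) (t (s k) - τ) = τ := by
      rw [Real.dist_eq]
      ring_nf
      exact abs_of_nonneg hτ0
    have h := Metric.infDist_le_infDist_add_dist (x := t (s k) - 0) (y := t (s k) - τ)
      (s := Set.range fun m : ℤ => ω * (m : ℝ))
    rw [hd] at h
    simp only [Function.comp_apply] at hk
    linarith
  obtain ⟨s, hs, hlt⟩ := extraction_forall_of_frequently hfreq
  exact ⟨s, hs, squeeze_zero (fun _ => Metric.infDist_nonneg) (fun l => (hlt l).le)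
    tendsto_one_div_add_atTop_nhds_zero_nat⟩

lemma tendstoUniformlyOn_translate {E : Type*} [NormedAddCommGroup E] {φ : ℝ → E} {ω : ℝ}
    (hφc : Continuous φ) (hφp : Function.Periodic φ ω) {r : ℕ → ℝ}
    (hr : TendsToModulo r 0 ω) (a b : ℝ) :
    TendstoUniformlyOn (fun k x => φ (x + r k)) φ atTop (Set.Icc a b) := by
  rw [Metric.tendstoUniformlyOn_iff]
  intro ε hε
  obtain ⟨δ, hδ, hunif⟩ := Metric.mem_uniformity_dist.1
    ((isCompact_Icc (a := a) (b := b)).uniformContinuousAt_of_continuousAt φ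
      (fun x _ => hφc.continuousAt) (Metric.dist_mem_uniformity hε))
  filter_upwards [hr.eventually_lt_const hδ] with k hk x hx
  obtain ⟨_, ⟨m, rfl⟩, hm⟩ := (Metric.infDist_lt_iff (Set.range_nonempty _)).1 hk
  have hshift : φ (x + r k) = φ (x + (r k - ω * m)) := by
    rw [← hφp.int_mul m (x + (r k - ω * m))]
    congr 1
    ring
  rw [hshift]
  refine hunif (a := x) (b := x + (r k - ω * m)) ?_ hx
  simpa [Real.dist_eq, abs_sub_comm] using hm

/-- If `φ` is continuous `ω`-periodic, `ψ` is Poisson stable with Poisson sequence `(t_k)`,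
and the Poisson number `κ_ω` of `(t_k)` with respect to `ω` equals zero, then the
modulo periodic Poisson stable function `f = φ + ψ` is itself Poisson stable. -/
theorem statement2 {n : ℕ} (ω : ℝ) (hω : 0 < ω)
    (φ ψ : ℝ → (Fin n → ℝ)) (tk : ℕ → ℝ)
    (hφc : Continuous φ) (hφp : Function.Periodic φ ω)
    (hψ : PoissonStableWith ψ tk)
    (hκ : poissonNumber tk ω = 0) :
    PoissonStable (fun t => φ t + ψ t) := by
  obtain ⟨hψc, ⟨M, hM⟩, htk, hψu⟩ := hψ
  obtain ⟨s, hs, hmod⟩ := exists_subseq_tendsToModulo_zero hω hκ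
  obtain ⟨C, hC⟩ := (hφp.isBounded_of_continuous hω.ne' hφc).exists_norm_le
  refine ⟨tk ∘ s, hφc.add hψc, ⟨C + M, fun x => ?_⟩, htk.comp hs.tendsto_atTop, fun a b => ?_⟩
  · exact norm_add_le_of_le (hC _ (Set.mem_range_self x)) (hM x)
  · exact (tendstoUniformlyOn_translate hφc hφp hmod a b).add
      (fun u hu => hs.tendsto_atTop.eventually (hψu a b u hu))
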